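/- arXiv:2503.12241 — 2 statements merged into one kernel-verified Lean document; each statement's English description precedes it below -/
import Mathlib

section
/- Let S = ⟨a_1, …, a_k⟩ be a numerical semigroup with minimal generators a_1 < ⋯ < a_k. Fix i ∈ {1,…,k} and x ∈ S such that Z(x,i) = {z ∈ Z(x) : z_i = ℓ_∞(z)} is nonempty. Then L_∞(x,i) = max{ℓ_∞(z) : z ∈ Z(x,i)} satisfies x/a_i − k·a_k ≤ L_∞(x,i) ≤ x/a_i. -/
open Finset

/-- `Zfac a x`: the set of factorizations of `x` with respect to the generators `a`. -/
def Zfac {k : ℕ} (a : Fin k → ℕ) (x : ℕ) : Set (Fin k → ℕ) :=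
  {z | ∑ j, z j * a j = x}

/-- The `∞`-length of a factorization: the maximum coordinate. -/
def linf {k : ℕ} (z : Fin k → ℕ) : ℕ :=
  Finset.univ.sup z

/-- The `0`-length of a factorization: the size of its support. -/
def lzero {k : ℕ} (z : Fin k → ℕ) : ℕ :=
  (Finset.univ.filter fun i => z i ≠ 0).card

/-- `𝓛∞(x)`: the set of `∞`-lengths of factorizations of `x`. -/
def LinfSet {k : ℕ} (a : Fin k → ℕ) (x : ℕ) : Set ℕ :=
  linf '' Zfac a x

/-- `𝓛∞(x, i)`: `∞`-lengths of factorizations whose maximum coordinate is attained at `i`. -/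
def LinfSetI {k : ℕ} (a : Fin k → ℕ) (x : ℕ) (i : Fin k) : Set ℕ :=
  linf '' {z | z ∈ Zfac a x ∧ z i = linf z}

/-- `𝓛₀(x)`: the set of `0`-lengths of factorizations of `x`. -/
def LzeroSet {k : ℕ} (a : Fin k → ℕ) (x : ℕ) : Set ℕ :=
  lzero '' Zfac a x

/-- The set of differences between consecutive elements of a set `T ⊆ ℕ`. -/
def deltaSet (T : Set ℕ) : Set ℕ :=
  {d | ∃ u ∈ T, ∃ v ∈ T, u < v ∧ v - u = d ∧ ∀ t ∈ T, ¬(u < t ∧ t < v)}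

/-- `Δ∞(x)`. -/
def DeltaInf {k : ℕ} (a : Fin k → ℕ) (x : ℕ) : Set ℕ := deltaSet (LinfSet a x)

/-- `Δ∞(S) = ⋃ x ∈ S, Δ∞(x)` (for `x ∉ S` the contribution is empty). -/
def DeltaInfS {k : ℕ} (a : Fin k → ℕ) : Set ℕ := ⋃ x : ℕ, DeltaInf a x

/-- `Δ₀(x)`. -/
def DeltaZero {k : ℕ} (a : Fin k → ℕ) (x : ℕ) : Set ℕ := deltaSet (LzeroSet a x)

/-- `Δ₀(S) = ⋃ x ∈ S, Δ₀(x)` (for `x ∉ S` the contribution is empty). -/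
def DeltaZeroS {k : ℕ} (a : Fin k → ℕ) : Set ℕ := ⋃ x : ℕ, DeltaZero a x

/-- `a` is a system of minimal generators: no generator is a `ℕ`-combination of the others. -/
def MinimalGens {k : ℕ} (a : Fin k → ℕ) : Prop :=
  ∀ i : Fin k, ¬ ∃ z : Fin k → ℕ, z i = 0 ∧ ∑ j, z j * a j = a i

/-!
Trading `a i` copies of `a j` for `a j` copies of `a i` turns one factorization of `x` into another.
If `z i` is the largest coordinate of `z` and `a i ≤ z j` for some `j ≠ i`, the trade keeps
coordinate `i` the largest and raises it by `a j`. So when `z i` is as large as possible, every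
`j ≠ i` has `z j < a i` or `a j = 0`, whence
`z i * a i ≤ x ≤ z i * a i + a i * ∑ j ≠ i, a j`; divide by `a i`.
-/

theorem sum_le_card_univ_mul {ι : Type*} [Fintype ι] {f : ι → ℕ} {M : ℕ} (h : ∀ j, f j ≤ M)
    (s : Finset ι) : ∑ j ∈ s, f j ≤ Fintype.card ι * M :=
  calc ∑ j ∈ s, f j ≤ s.card * M := sum_le_card_nsmul s f M fun j _ => h j
    _ ≤ Fintype.card ι * M := Nat.mul_le_mul_right M (card_le_univ s)

section

variable {k : ℕ} {a z : Fin k → ℕ} {x : ℕ} {i j : Fin k}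

theorem MinimalGens.pos (h : MinimalGens a) (i : Fin k) : 0 < a i :=
  Nat.pos_of_ne_zero fun hi => h i ⟨0, rfl, by simp [hi]⟩

theorem apply_eq_linf_iff : z i = linf z ↔ ∀ j, z j ≤ z i := by
  constructor
  · intro h j
    exact h ▸ le_sup (mem_univ j)
  · intro h
    exact le_antisymm (le_sup (mem_univ i)) (Finset.sup_le fun j _ => h j)

theorem mem_linfSetI {m : ℕ} :
    m ∈ LinfSetI a x i ↔ ∃ z ∈ Zfac a x, (∀ j, z j ≤ z i) ∧ z i = m := by
  simp only [← apply_eq_linf_iff]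
  constructor
  · rintro ⟨z, ⟨hz, hzi⟩, rfl⟩
    exact ⟨z, hz, hzi, hzi⟩
  · rintro ⟨z, hz, hzi, rfl⟩
    exact ⟨z, ⟨hz, hzi⟩, hzi.symm⟩

theorem apply_mul_le_of_mem_zfac (hz : z ∈ Zfac a x) (i : Fin k) : z i * a i ≤ x :=
  calc z i * a i ≤ ∑ j, z j * a j :=
        single_le_sum (f := fun j => z j * a j) (fun _ _ => Nat.zero_le _) (mem_univ i)
    _ = x := hz

theorem mul_le_of_mem_linfSetI {m : ℕ} (hm : m ∈ LinfSetI a x i) : m * a i ≤ x := by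
  obtain ⟨z, hz, -, rfl⟩ := mem_linfSetI.mp hm
  exact apply_mul_le_of_mem_zfac hz i

theorem bddAbove_linfSetI (hi : 0 < a i) : BddAbove (LinfSetI a x i) :=
  ⟨x, fun m hm => (Nat.le_mul_of_pos_right m hi).trans (mul_le_of_mem_linfSetI hm)⟩

theorem isGreatest_sSup_linfSetI (hi : 0 < a i) (hne : (LinfSetI a x i).Nonempty) :
    IsGreatest (LinfSetI a x i) (sSup (LinfSetI a x i)) :=
  have hbdd := bddAbove_linfSetI hi
  ⟨Nat.sSup_mem hne hbdd, fun _ hm => le_csSup hbdd hm⟩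

theorem add_single_mem_zfac_comm :
    z + Pi.single j (a i) ∈ Zfac a x ↔ z + Pi.single i (a j) ∈ Zfac a x := by
  change (z + Pi.single j (a i)) ⬝ᵥ a = x ↔ (z + Pi.single i (a j)) ⬝ᵥ a = x
  simp only [add_dotProduct, single_dotProduct, mul_comm (a i)]

theorem apply_add_mem_linfSetI (hz : z ∈ Zfac a x) (hmax : ∀ l, z l ≤ z i) (hij : i ≠ j)
    (hj : a i ≤ z j) : z i + a j ∈ LinfSetI a x i := by
  have hsingle : Pi.single j (a i) ≤ z := update_le_iff.mpr ⟨hj, fun l _ => Nat.zero_le (z l)⟩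
  obtain ⟨u, rfl⟩ : ∃ u : Fin k → ℕ, z = u + Pi.single j (a i) :=
    ⟨_, (tsub_add_cancel_of_le hsingle).symm⟩
  refine mem_linfSetI.mpr
    ⟨u + Pi.single i (a j), add_single_mem_zfac_comm.mp hz, fun l => ?_, by simp [hij]⟩
  have hl : u l ≤ u i := by simpa [hij] using (Nat.le_add_right _ _).trans (hmax l)
  by_cases h : l = i
  · rw [h]
  · simpa [h] using hl.trans (Nat.le_add_right _ _)

theorem apply_mul_le_of_apply_mem_upperBounds (hz : z ∈ Zfac a x) (hmax : ∀ l, z l ≤ z i)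
    (hub : z i ∈ upperBounds (LinfSetI a x i)) (hij : i ≠ j) : z j * a j ≤ a i * a j := by
  rcases lt_or_ge (z j) (a i) with hlt | hge
  · exact Nat.mul_le_mul_right _ hlt.le
  · have hle : z i + a j ≤ z i := hub (apply_add_mem_linfSetI hz hmax hij hge)
    have hj : a j = 0 := by omega
    simp [hj]

theorem le_mul_of_isGreatest_linfSetI {m : ℕ} (hm : IsGreatest (LinfSetI a x i) m) :
    x ≤ (m + ∑ j ∈ univ.erase i, a j) * a i := by
  obtain ⟨⟨z, hz, hmax, rfl⟩, hub⟩ := hm.imp_left mem_linfSetI.mp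
  calc x = ∑ j, z j * a j := hz.symm
    _ = z i * a i + ∑ j ∈ univ.erase i, z j * a j := (add_sum_erase _ _ (mem_univ i)).symm
    _ ≤ z i * a i + ∑ j ∈ univ.erase i, a i * a j := by
        gcongr z i * a i + ?_
        exact sum_le_sum fun j hj =>
          apply_mul_le_of_apply_mem_upperBounds hz hmax hub (ne_of_mem_erase hj).symm
    _ = (z i + ∑ j ∈ univ.erase i, a j) * a i := by rw [← mul_sum]; ring

theorem stmt_1_general (hi : 0 < a i) (hne : (LinfSetI a x i).Nonempty) :
    (x : ℚ) / a i - ∑ j ∈ univ.erase i, (a j : ℚ) ≤ (sSup (LinfSetI a x i) : ℕ) ∧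
      ((sSup (LinfSetI a x i) : ℕ) : ℚ) ≤ (x : ℚ) / a i := by
  have hgreatest := isGreatest_sSup_linfSetI hi hne
  have hi' : (0 : ℚ) < a i := by exact_mod_cast hi
  rw [sub_le_iff_le_add, div_le_iff₀ hi', le_div_iff₀ hi']
  exact_mod_cast And.intro (le_mul_of_isGreatest_linfSetI hgreatest)
    (mul_le_of_mem_linfSetI hgreatest.1)

end

/-- If `Z(x,i)` is nonempty, then `L_∞(x,i) = max 𝓛∞(x,i)` satisfies
`x/a_i − k·a_k ≤ L_∞(x,i) ≤ x/a_i`. -/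
theorem stmt_1 (k : ℕ) (hk : 1 ≤ k) (a : Fin k → ℕ)
    (hmono : StrictMono a)
    (hgcd : Finset.univ.gcd a = 1)
    (hmin : MinimalGens a)
    (i : Fin k) (x : ℕ) (hx : (Zfac a x).Nonempty)
    (hne : (LinfSetI a x i).Nonempty) :
    (x : ℚ) / (a i : ℚ) - (k : ℚ) * (a ⟨k - 1, by omega⟩ : ℚ) ≤ ((sSup (LinfSetI a x i) : ℕ) : ℚ) ∧
      ((sSup (LinfSetI a x i) : ℕ) : ℚ) ≤ (x : ℚ) / (a i : ℚ) := by
  have hlast : ∀ j, a j ≤ a ⟨k - 1, by omega⟩ := fun j =>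
    hmono.monotone (Nat.le_sub_one_of_lt j.isLt)
  have hsum : ∑ j ∈ univ.erase i, (a j : ℚ) ≤ k * a ⟨k - 1, by omega⟩ := by
    exact_mod_cast (sum_le_card_univ_mul hlast (univ.erase i)).trans_eq (by rw [Fintype.card_fin])
  exact (stmt_1_general (hmin.pos i) hne).imp_left (sub_le_sub_left hsum _).trans
end

section
/- Let p_1 > p_2 > ⋯ > p_k ≥ 2 be pairwise coprime integers with k ≥ 2, let T = p_1 p_2 ⋯ p_k, and let S = ⟨a_1, …, a_k⟩ where a_i = T/p_i for each i (a supersymmetric numerical semigroup). Then Δ_∞(S) = {1, 2, …, p_1}. -/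
open Finset

/-!
Modulo `p i` every generator but the `i`-th vanishes and the `i`-th is invertible, so two
factorizations of the same element agree modulo `p i` in coordinate `i`. Hence two factorizations
`y ≠ z` are linked by exchanges that lower one coordinate `i` by `p i` and raise another
coordinate `j` by `p j`. Moving from `z` towards `y` in this way lowers the maximum by at most
`max p` at a time, so no gap between `∞`-lengths exceeds `max p`.

Conversely, let `p i₁` and `p i₂` be the two largest values. For `s ≤ p i₂ ≤ N < p i₁`, the
element `s * a i₁ + N * a i₂` has `∞`-lengths `N` and `s + p i₁` and none in between: a
factorization `y` with `y i₁ = s` has all other coordinates at most `N`, because `a i₂` is the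
smallest generator other than `a i₁`, and any other `y` has `s + p i₁ ≤ y i₁`. The resulting gaps
`s + p i₁ - N` take all values from `1` to `p i₁`.
-/

variable {k : ℕ}

section Factorizations

variable {a : Fin k → ℕ} {x : ℕ} {y z : Fin k → ℕ}

lemma mem_zfac_iff_dotProduct : z ∈ Zfac a x ↔ z ⬝ᵥ a = x := Iff.rfl

lemma le_linf (z : Fin k → ℕ) (i : Fin k) : z i ≤ linf z :=
  Finset.le_sup (Finset.mem_univ i)

lemma linf_le_iff {n : ℕ} : linf z ≤ n ↔ ∀ i, z i ≤ n := by
  simp [linf]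

lemma linf_single_add_single {i j : Fin k} (hij : i ≠ j) (m n : ℕ) :
    linf (Pi.single i m + Pi.single j n) = max m n := by
  refine le_antisymm (linf_le_iff.2 fun l => ?_) (max_le ?_ ?_)
  · rcases eq_or_ne l i with rfl | hi
    · simp [hij]
    · rcases eq_or_ne l j with rfl | hj <;> simp [*]
  · exact le_of_eq_of_le (by simp [hij]) (le_linf _ i)
  · exact le_of_eq_of_le (by simp [hij.symm]) (le_linf _ j)

lemma single_add_single_mem_zfac (a : Fin k → ℕ) (i j : Fin k) (m n : ℕ) :
    Pi.single i m + Pi.single j n ∈ Zfac a (m * a i + n * a j) := by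
  rw [mem_zfac_iff_dotProduct, add_dotProduct, single_dotProduct, single_dotProduct]

lemma exists_exchange {i j : Fin k} {m n : ℕ} (hz : z ∈ Zfac a x) (hij : i ≠ j)
    (hmn : m * a i = n * a j) (hm : m ≤ z i) :
    ∃ w ∈ Zfac a x, w i + m = z i ∧ w j = z j + n ∧ ∀ l, l ≠ i → l ≠ j → w l = z l := by
  let w := Function.update (Function.update z j (z j + n)) i (z i - m)
  have hwi : w i + m = z i := by simp [w, hm]
  have hwj : w j = z j + n := by simp [w, hij.symm]
  have hwl (l : Fin k) (hli : l ≠ i) (hlj : l ≠ j) : w l = z l := by simp [w, hli, hlj]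
  have hwz : w + Pi.single i m = z + Pi.single j n := by
    ext l
    rcases eq_or_ne l i with rfl | hli
    · simp [hwi, hij]
    · rcases eq_or_ne l j with rfl | hlj <;> simp [*]
  have hsum : w ⬝ᵥ a + m * a i = z ⬝ᵥ a + n * a j := by
    simpa only [add_dotProduct, single_dotProduct] using congrArg (· ⬝ᵥ a) hwz
  refine ⟨w, mem_zfac_iff_dotProduct.2 ?_, hwi, hwj, hwl⟩
  exact (Nat.add_right_cancel (hmn ▸ hsum)).trans hz

lemma exists_lt_of_mem_zfac (hy : y ∈ Zfac a x) (hz : z ∈ Zfac a x) {i : Fin k}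
    (ha : 0 < a i) (hi : y i < z i) : ∃ j, z j < y j := by
  by_contra! hyz
  have hlt : ∑ l, y l * a l < ∑ l, z l * a l :=
    Finset.sum_lt_sum (fun l _ => Nat.mul_le_mul_right _ (hyz l))
      ⟨i, Finset.mem_univ i, Nat.mul_lt_mul_of_pos_right hi ha⟩
  exact hlt.ne (hy.trans hz.symm)

lemma apply_le_of_mem_zfac {i j l : Fin k} {s N : ℕ} (hy : y ∈ Zfac a (s * a i + N * a j))
    (hi : y i = s) (hl : l ≠ i) (hj : 0 < a j) (hjl : a j ≤ a l) : y l ≤ N := by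
  have hpair : y i * a i + y l * a l ≤ ∑ m, y m * a m :=
    Finset.add_le_sum (f := fun m => y m * a m) (fun _ _ => Nat.zero_le _)
      (Finset.mem_univ i) (Finset.mem_univ l) hl.symm
  have hsum : ∑ m, y m * a m = s * a i + N * a j := hy
  have hN : y l * a l ≤ N * a j := by
    rw [hsum, hi] at hpair
    exact Nat.le_of_add_le_add_left hpair
  exact Nat.le_of_mul_le_mul_right ((Nat.mul_le_mul_left _ hjl).trans hN) hj

lemma modEq_of_mem_zfac {i : Fin k} {m : ℕ} (hdvd : ∀ j ≠ i, m ∣ a j)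
    (hcop : m.Coprime (a i)) (hy : y ∈ Zfac a x) (hz : z ∈ Zfac a x) : y i ≡ z i [MOD m] := by
  have modEq_apply {u : Fin k → ℕ} (hu : u ∈ Zfac a x) : u i * a i ≡ x [MOD m] := by
    have hsum : u i * a i + ∑ j ∈ Finset.univ.erase i, u j * a j = x :=
      (Finset.add_sum_erase _ _ (Finset.mem_univ i)).trans hu
    have hrest : m ∣ ∑ j ∈ Finset.univ.erase i, u j * a j :=
      Finset.dvd_sum fun j hj => (hdvd j (Finset.ne_of_mem_erase hj)).mul_left _
    exact hsum ▸ ((Nat.modEq_zero_iff_dvd.2 hrest).add_left (u i * a i)).symm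
  exact ((modEq_apply hy).trans (modEq_apply hz).symm).cancel_right_of_coprime hcop

end Factorizations

/-- The generators `a_i = T / p_i`, where `T = p_1 ⋯ p_k`, of the supersymmetric numerical
semigroup attached to `p`. -/
def supersymmGen (p : Fin k → ℕ) (i : Fin k) : ℕ := (∏ j, p j) / p i

/-- The excess of `z` over `y`, which decreases as exchanges move `z` towards `y`. Truncated
subtraction restricts it to the coordinates where `z` is larger. -/
def excess (y z : Fin k → ℕ) : ℕ := ∑ l, (z l - y l)

section Supersymmetric

variable {p : Fin k → ℕ}

lemma mul_supersymmGen (p : Fin k → ℕ) (i : Fin k) : p i * supersymmGen p i = ∏ j, p j :=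
  Nat.mul_div_cancel' (Finset.dvd_prod_of_mem p (Finset.mem_univ i))

lemma supersymmGen_eq_prod_erase {i : Fin k} (hi : 0 < p i) :
    supersymmGen p i = ∏ j ∈ Finset.univ.erase i, p j :=
  Nat.div_eq_of_eq_mul_right hi (Finset.mul_prod_erase _ _ (Finset.mem_univ i)).symm

lemma supersymmGen_pos (hpos : ∀ i, 0 < p i) (i : Fin k) : 0 < supersymmGen p i := by
  rw [supersymmGen_eq_prod_erase (hpos i)]
  exact Finset.prod_pos fun j _ => hpos j

lemma dvd_supersymmGen {i j : Fin k} (hj : 0 < p j) (hij : i ≠ j) : p i ∣ supersymmGen p j := by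
  rw [supersymmGen_eq_prod_erase hj]
  exact Finset.dvd_prod_of_mem p (Finset.mem_erase.2 ⟨hij, Finset.mem_univ i⟩)

lemma coprime_supersymmGen {i : Fin k} (hi : 0 < p i)
    (hcop : ∀ j ≠ i, (p i).Coprime (p j)) : (p i).Coprime (supersymmGen p i) := by
  rw [supersymmGen_eq_prod_erase hi]
  exact Nat.Coprime.prod_right fun j hj => hcop j (Finset.ne_of_mem_erase hj)

lemma supersymmGen_le_supersymmGen {i j : Fin k} (hj : 0 < p j) (hji : p j ≤ p i) :
    supersymmGen p i ≤ supersymmGen p j :=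
  Nat.div_le_div_left hji hj

variable {x : ℕ} {y z : Fin k → ℕ}

lemma modEq_of_mem_zfac_supersymmGen (hpos : ∀ i, 0 < p i)
    (hcop : Pairwise fun i j => (p i).Coprime (p j)) (hy : y ∈ Zfac (supersymmGen p) x)
    (hz : z ∈ Zfac (supersymmGen p) x) (i : Fin k) : y i ≡ z i [MOD p i] :=
  modEq_of_mem_zfac (fun j hj => dvd_supersymmGen (hpos j) hj.symm)
    (coprime_supersymmGen (hpos i) fun _ hj => hcop hj.symm) hy hz

lemma exists_mem_zfac_supersymmGen_excess_lt (hpos : ∀ i, 0 < p i)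
    (hcop : Pairwise fun i j => (p i).Coprime (p j)) (hy : y ∈ Zfac (supersymmGen p) x)
    (hz : z ∈ Zfac (supersymmGen p) x) {i : Fin k} (hi : y i < z i) :
    ∃ w ∈ Zfac (supersymmGen p) x, w i + p i = z i ∧ excess y w < excess y z := by
  obtain ⟨j, hj⟩ := exists_lt_of_mem_zfac hy hz (supersymmGen_pos hpos i) hi
  have hij : i ≠ j := by rintro rfl; exact hi.asymm hj
  have hmod := modEq_of_mem_zfac_supersymmGen hpos hcop hy hz
  have hi_add : y i + p i ≤ z i := (hmod i).add_le_of_lt hi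
  have hj_add : z j + p j ≤ y j := (hmod j).symm.add_le_of_lt hj
  have hmul : p i * supersymmGen p i = p j * supersymmGen p j := by
    rw [mul_supersymmGen, mul_supersymmGen]
  obtain ⟨w, hw, hwi, hwj, hwl⟩ := exists_exchange hz hij hmul (by omega)
  have hlt : w i - y i < z i - y i := by
    have := hpos i
    omega
  refine ⟨w, hw, hwi, Finset.sum_lt_sum (fun l _ => ?_) ⟨i, Finset.mem_univ i, hlt⟩⟩
  rcases eq_or_ne l i with rfl | hli
  · exact hlt.le
  · rcases eq_or_ne l j with rfl | hlj
    · omega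
    · rw [hwl l hli hlj]

lemma exists_mem_linfSet_supersymmGen_le_add (hpos : ∀ i, 0 < p i)
    (hcop : Pairwise fun i j => (p i).Coprime (p j)) {P : ℕ} (hP : ∀ i, p i ≤ P)
    (hy : y ∈ Zfac (supersymmGen p) x) (hz : z ∈ Zfac (supersymmGen p) x)
    (hyz : linf y < linf z) :
    ∃ t ∈ LinfSet (supersymmGen p) x, linf y < t ∧ t ≤ linf y + P := by
  obtain ⟨v, ⟨hv, hyv⟩, hmin⟩ := exists_minimalFor_of_wellFoundedLT
    (fun v => v ∈ Zfac (supersymmGen p) x ∧ linf y < linf v) (excess y) ⟨z, hz, hyz⟩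
  refine ⟨linf v, Set.mem_image_of_mem linf hv, hyv, linf_le_iff.2 fun i => ?_⟩
  by_contra! hi
  have hyi : y i < v i := (le_linf y i).trans_lt (by omega)
  obtain ⟨w, hw, hwi, hlt⟩ :=
    exists_mem_zfac_supersymmGen_excess_lt hpos hcop hy hv hyi
  have hyw : linf y < linf w := by
    have := le_linf w i
    have := hP i
    omega
  exact (hmin ⟨hw, hyw⟩ hlt.le).not_gt hlt

theorem deltaInfS_supersymmGen_subset_Icc (hpos : ∀ i, 0 < p i)
    (hcop : Pairwise fun i j => (p i).Coprime (p j)) {P : ℕ} (hP : ∀ i, p i ≤ P) :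
    DeltaInfS (supersymmGen p) ⊆ Set.Icc 1 P := by
  refine Set.iUnion_subset fun x => ?_
  rintro _ ⟨_, ⟨y, hy, rfl⟩, _, ⟨z, hz, rfl⟩, hyz, rfl, hgap⟩
  obtain ⟨t, ht, hyt, htP⟩ :=
    exists_mem_linfSet_supersymmGen_le_add hpos hcop hP hy hz hyz
  have hzt : linf z ≤ t := not_lt.1 fun htz => hgap t ht ⟨hyt, htz⟩
  exact ⟨Nat.sub_pos_of_lt hyz, Nat.sub_le_of_le_add (by omega)⟩

variable {i₁ i₂ : Fin k}

lemma linf_le_or_le_linf_of_mem_zfac (hpos : ∀ i, 0 < p i)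
    (hcop : Pairwise fun i j => (p i).Coprime (p j)) (h12 : i₁ ≠ i₂)
    (hmax : ∀ l ≠ i₁, p l ≤ p i₂) {s N : ℕ} (hsN : s ≤ N) (hs : s < p i₁)
    (hy : y ∈ Zfac (supersymmGen p) (s * supersymmGen p i₁ + N * supersymmGen p i₂)) :
    linf y ≤ N ∨ s + p i₁ ≤ linf y := by
  have hmod : s ≡ y i₁ [MOD p i₁] := by
    simpa [h12] using modEq_of_mem_zfac_supersymmGen hpos hcop
      (single_add_single_mem_zfac _ i₁ i₂ s N) hy i₁
  rcases lt_trichotomy s (y i₁) with hlt | heq | hgt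
  · exact .inr ((hmod.add_le_of_lt hlt).trans (le_linf y i₁))
  · refine .inl (linf_le_iff.2 fun l => ?_)
    rcases eq_or_ne l i₁ with rfl | hl
    · exact heq ▸ hsN
    · exact apply_le_of_mem_zfac hy heq.symm hl (supersymmGen_pos hpos i₂)
        (supersymmGen_le_supersymmGen (hpos l) (hmax l hl))
  · exact absurd (hmod.eq_of_lt_of_lt hs (hgt.trans hs)) hgt.ne'

lemma add_sub_mem_deltaInfS_supersymmGen (hpos : ∀ i, 0 < p i)
    (hcop : Pairwise fun i j => (p i).Coprime (p j)) (hmax : ∀ l ≠ i₁, p l ≤ p i₂) {s N : ℕ}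
    (hs : s ≤ p i₂) (hN : p i₂ ≤ N) (hN₁ : N < p i₁) :
    s + p i₁ - N ∈ DeltaInfS (supersymmGen p) := by
  have h12 : i₁ ≠ i₂ := by rintro rfl; exact hN₁.not_ge hN
  set a := supersymmGen p
  have hN_mem : N ∈ LinfSet a (s * a i₁ + N * a i₂) :=
    ⟨_, single_add_single_mem_zfac a i₁ i₂ s N, by
      rw [linf_single_add_single h12, max_eq_right (hs.trans hN)]⟩
  have hexchange : (s + p i₁) * a i₁ + (N - p i₂) * a i₂ = s * a i₁ + N * a i₂ := by
    obtain ⟨m, rfl⟩ := Nat.exists_eq_add_of_le' hN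
    have hmul : p i₁ * a i₁ = p i₂ * a i₂ := by rw [mul_supersymmGen, mul_supersymmGen]
    rw [Nat.add_sub_cancel, add_mul, add_mul, hmul]
    ring
  have hs_mem : s + p i₁ ∈ LinfSet a (s * a i₁ + N * a i₂) :=
    ⟨_, hexchange ▸ single_add_single_mem_zfac a i₁ i₂ (s + p i₁) (N - p i₂), by
      rw [linf_single_add_single h12, max_eq_left (by omega)]⟩
  refine Set.mem_iUnion.2 ⟨_, N, hN_mem, s + p i₁, hs_mem, by omega, rfl, ?_⟩
  rintro _ ⟨y, hy, rfl⟩ ⟨hNy, hys⟩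
  rcases linf_le_or_le_linf_of_mem_zfac hpos hcop h12 hmax (hs.trans hN) (by omega) hy with h | h
  · exact hNy.not_ge h
  · exact hys.not_ge h

theorem Icc_subset_deltaInfS_supersymmGen (hpos : ∀ i, 0 < p i)
    (hcop : Pairwise fun i j => (p i).Coprime (p j)) (hlt : p i₂ < p i₁)
    (hmax : ∀ l ≠ i₁, p l ≤ p i₂) :
    Set.Icc 1 (p i₁) ⊆ DeltaInfS (supersymmGen p) := by
  rintro d ⟨hd₁, hd₂⟩
  obtain ⟨s, N, hs, hN, hN₁, rfl⟩ :
      ∃ s N, s ≤ p i₂ ∧ p i₂ ≤ N ∧ N < p i₁ ∧ s + p i₁ - N = d :=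
    ⟨d + max (p i₁ - d) (p i₂) - p i₁, max (p i₁ - d) (p i₂), by omega, by omega, by omega,
      by omega⟩
  exact add_sub_mem_deltaInfS_supersymmGen hpos hcop hmax hs hN hN₁

end Supersymmetric

/-- For a supersymmetric numerical semigroup with `a_i = T/p_i`,
`Δ∞(S) = {1, 2, …, p₁}`. -/
theorem stmt_9 (k : ℕ) (hk : 2 ≤ k) (p : Fin k → ℕ)
    (hdec : StrictAnti p) (h2 : ∀ i, 2 ≤ p i)
    (hcop : ∀ i j, i ≠ j → Nat.Coprime (p i) (p j))
    (T : ℕ) (hT : T = ∏ i, p i)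
    (i1 : Fin k) (hi1 : (i1 : ℕ) = 0) :
    DeltaInfS (fun i => T / p i) = Set.Icc 1 (p i1) := by
  subst hT
  have hpos : ∀ i, 0 < p i := fun i => two_pos.trans_le (h2 i)
  have hcop' : Pairwise fun i j => (p i).Coprime (p j) := fun i j => hcop i j
  let i2 : Fin k := ⟨1, hk⟩
  have h12 : i1 < i2 := Fin.lt_def.2 (by simp [i2, hi1])
  have hle_p1 (i : Fin k) : p i ≤ p i1 := hdec.antitone (Fin.le_def.2 (by omega))
  have hle_p2 (i : Fin k) (hi : i ≠ i1) : p i ≤ p i2 := by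
    refine hdec.antitone (Fin.le_def.2 (Nat.one_le_iff_ne_zero.2 fun h => hi (Fin.ext ?_)))
    rw [h, hi1]
  exact (deltaInfS_supersymmGen_subset_Icc hpos hcop' hle_p1).antisymm
    (Icc_subset_deltaInfS_supersymmGen hpos hcop' (hdec h12) hle_p2)
end
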